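/- In the critical-execution setting (a recoverable wait-free binary consensus algorithm for the n processes, a configuration C, an integer z ≥ 1, and α ∈ 𝓔*_z(C) critical with respect to 𝓔*_z(C)), the configuration Cα is bivalent with respect to 𝓔*_z(Cα). -/

import Mathlib

/-!
Let `α` be critical. Any extension of `α` by steps only is allowed, so `α p_j` is univalent for
every process `p_j`; the point is that for each `v` some `α p_j` is `v`-univalent
(`exists_onTeam`). Take `αβ ∈ 𝓔*_z(C)` in which `v` is decided.

* If `β` is empty, `α p_0` is `v`-univalent; if `β` starts with a step of `p_j`, `α p_j` is.
* If `β` starts with a crash `c_i`, then `i ≠ 0` and `α c_i` is `v`-univalent. The executions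
  `α c_i p_0` and `α p_0 c_i` lie in `𝓔*_z(C)` and reach the same configuration, in which `p_i` is
  in its initial state. A solo run of `p_i` from there decides some value, which is `v` because it
  extends `α c_i`; hence `α p_0` is `v`-univalent too.

Given a `v`-univalent `α p_j`, consider `p_j p_0 c_{n-1}` followed by a solo run of `p_{n-1}` until
it decides. The step of `p_0` pays for the crash, so this lies in `𝓔*_z(Cα)`, and prepending `α`
keeps it in `𝓔*_z(C)`, because the crash bounds add up (`append_mem_estar`). The decided value is
therefore `v`. The crash before each solo run is what makes wait-freedom applicable, since the
states of the processes in `C` are arbitrary.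
-/

namespace RecoverableConsensus

/-- A deterministic object type: a set of values, operations and responses together with a
transition function assigning to each (value, operation) pair a unique response and a unique
resulting value. -/
structure DetType : Type 1 where
  Value : Type
  Op : Type
  Resp : Type
  δ : Value → Op → Resp × Value

/-- A type is readable if it has a Read operation that returns (an injective encoding of)
the current value of the object without changing it. -/
def Readable (T : DetType) : Prop :=
  ∃ (read : T.Op) (ι : T.Value → T.Resp),
    Function.Injective ι ∧ ∀ v, T.δ v read = (ι v, v)

/-- The register type over the value set `V`: the operation `none` is Read (returning the
current value without changing it) and `some v` is Write(v) (changing the value to `v`). -/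
def RegisterType (V : Type) : DetType where
  Value := V
  Op := Option V
  Resp := V
  δ := fun u op =>
    match op with
    | none => (u, u)
    | some v => (v, v)

def IsRegister (T : DetType) : Prop := ∃ V : Type, T = RegisterType V

/-- An event is either a step by a process or a crash of a process. -/
inductive Event (n : ℕ) : Type where
  | step : Fin n → Event n
  | crash : Fin n → Event n
deriving DecidableEq

/-- An algorithm for `n` processes: a collection of shared objects, each with a deterministic
type and an initial value, and for each process a deterministic state machine with an initial
state depending on the process's binary input.  Each state determines the process's next step
(`pending`: an operation applied to a designated object, or `none` for a no-op); the state
reached after a step is determined by the current state and the response received (`next`).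
`output i s = some v` means that `s` is an output state of process `i` for the value `v`;
processes in output states take only no-op steps. -/
structure Algorithm (n : ℕ) : Type 1 where
  ObjIdx : Type
  objType : ObjIdx → DetType
  objInit : (o : ObjIdx) → (objType o).Value
  PState : Fin n → Type
  init : (i : Fin n) → Bool → PState i
  pending : (i : Fin n) → PState i → Option ((o : ObjIdx) × (objType o).Op)
  next : (i : Fin n) → PState i → (o : ObjIdx) → (objType o).Resp → PState i
  output : (i : Fin n) → PState i → Option Bool
  output_noop : ∀ i s, output i s ≠ none → pending i s = none

/-- A configuration assigns a state to each process and a value to each object. -/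
structure Config {n : ℕ} (A : Algorithm n) : Type where
  pstate : (i : Fin n) → A.PState i
  oval : (o : A.ObjIdx) → (A.objType o).Value

variable {n : ℕ}

/-- The effect of one event on a configuration.  A crash of `p_i` resets `p_i` to its initial
state (for its input) and leaves all object values unchanged; a step of `p_i` applies its
pending operation (if any) to the designated object, receiving the response determined by the
type's transition function. -/
noncomputable def applyEvent (A : Algorithm n) (input : Fin n → Bool) (C : Config A) :
    Event n → Config A
  | .crash i => { C with pstate := Function.update C.pstate i (A.init i (input i)) }
  | .step i =>
    letI : DecidableEq A.ObjIdx := Classical.decEq _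
    match A.pending i (C.pstate i) with
    | none => C
    | some ⟨o, op⟩ =>
      { pstate := Function.update C.pstate i
          (A.next i (C.pstate i) o ((A.objType o).δ (C.oval o) op).1),
        oval := Function.update C.oval o ((A.objType o).δ (C.oval o) op).2 }

/-- Since the algorithm is deterministic, a finite execution from `C` is determined by its
schedule, i.e. its list of events; `run A input C σ` is the configuration `Cσ` reached by
applying the events of `σ` in order from `C`. -/
noncomputable def run (A : Algorithm n) (input : Fin n → Bool) (C : Config A) :
    List (Event n) → Config A
  | [] => C
  | e :: σ => run A input (applyEvent A input C e) σ

/-- The initial configuration: every process in its initial state, every object at its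
initial value. -/
def initConfig (A : Algorithm n) (input : Fin n → Bool) : Config A :=
  ⟨fun i => A.init i (input i), A.objInit⟩

/-- Process `i` has decided `v` in `Cσ`: at some point along the execution `σ` from `C`,
process `i` was in an output state for `v`. -/
def HasDecided (A : Algorithm n) (input : Fin n → Bool) (C : Config A)
    (σ : List (Event n)) (i : Fin n) (v : Bool) : Prop :=
  ∃ τ, τ <+: σ ∧ A.output i ((run A input C τ).pstate i) = some v

def CrashFree (σ : List (Event n)) : Prop := ∀ i : Fin n, Event.crash i ∉ σ

/-- The first `k` events of an infinite execution. -/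
def initSeg (e : ℕ → Event n) (k : ℕ) : List (Event n) := (List.range k).map e

/-- Agreement: in every execution no two processes decide different values. -/
def Agreement (A : Algorithm n) : Prop :=
  ∀ (input : Fin n → Bool) (σ : List (Event n)) (i j : Fin n) (v w : Bool),
    HasDecided A input (initConfig A input) σ i v →
    HasDecided A input (initConfig A input) σ j w → v = w

/-- Validity: every decided value is the input of some process. -/
def Validity (A : Algorithm n) : Prop :=
  ∀ (input : Fin n → Bool) (σ : List (Event n)) (i : Fin n) (v : Bool),
    HasDecided A input (initConfig A input) σ i v → ∃ j, input j = v

/-- Recoverable wait-freedom: every process, starting from its initial state, either crashes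
or decides within a finite number of its own steps.  Equivalently: in every infinite execution
in which process `i` starts at (or is reset by a crash to) its initial state, takes infinitely
many steps and crashes only finitely often, it eventually reaches an output state. -/
def RecWaitFree (A : Algorithm n) : Prop :=
  ∀ (input : Fin n → Bool) (C : Config A) (e : ℕ → Event n) (i : Fin n),
    (C.pstate i = A.init i (input i) ∨ ∃ k, e k = Event.crash i) →
    (∀ m, ∃ k, m ≤ k ∧ e k = Event.step i) →
    (∃ m, ∀ k, m ≤ k → e k ≠ Event.crash i) →
    ∃ (k : ℕ) (v : Bool), A.output i ((run A input C (initSeg e k)).pstate i) = some v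

/-- A recoverable wait-free binary consensus algorithm. -/
def SolvesRecConsensus (A : Algorithm n) : Prop :=
  Agreement A ∧ Validity A ∧ RecWaitFree A

/-- Agreement restricted to crash-free executions. -/
def AgreementCF (A : Algorithm n) : Prop :=
  ∀ (input : Fin n → Bool) (σ : List (Event n)), CrashFree σ →
    ∀ (i j : Fin n) (v w : Bool),
      HasDecided A input (initConfig A input) σ i v →
      HasDecided A input (initConfig A input) σ j w → v = w

/-- Validity restricted to crash-free executions. -/
def ValidityCF (A : Algorithm n) : Prop :=
  ∀ (input : Fin n → Bool) (σ : List (Event n)), CrashFree σ →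
    ∀ (i : Fin n) (v : Bool),
      HasDecided A input (initConfig A input) σ i v → ∃ j, input j = v

/-- Wait-freedom: in crash-free executions, every process that takes infinitely many steps
decides. -/
def WaitFree (A : Algorithm n) : Prop :=
  ∀ (input : Fin n → Bool) (e : ℕ → Event n),
    (∀ (k : ℕ) (i : Fin n), e k ≠ Event.crash i) →
    ∀ i : Fin n, (∀ m, ∃ k, m ≤ k ∧ e k = Event.step i) →
    ∃ (k : ℕ) (v : Bool),
      A.output i ((run A input (initConfig A input) (initSeg e k)).pstate i) = some v

/-- A wait-free binary consensus algorithm (for the model in which crashes are permanent,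
i.e. only crash-free executions are relevant). -/
def SolvesWFConsensus (A : Algorithm n) : Prop :=
  AgreementCF A ∧ ValidityCF A ∧ WaitFree A

/-- The number of crashes of process `i` in `σ`. -/
def crashCount (i : Fin n) (σ : List (Event n)) : ℕ :=
  (σ.filter fun e => decide (e = Event.crash i)).length

def isStepBelow (i : Fin n) : Event n → Bool
  | .step j => decide (j < i)
  | .crash _ => false

/-- The total number of steps taken by processes `p_0, …, p_{i-1}` in `σ`. -/
def stepsBelow (i : Fin n) (σ : List (Event n)) : ℕ := (σ.filter (isStepBelow i)).length

/-- The crash bound: for every process `p_i`, the number of crashes of `p_i` is at most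
`z·n` times the total number of steps of `p_0, …, p_{i-1}` (for `i = 0` this says that `p_0`
never crashes). -/
def EMem (z : ℕ) (σ : List (Event n)) : Prop :=
  ∀ i : Fin n, crashCount i σ ≤ z * n * stepsBelow i σ

/-- `𝓔_z`: executions satisfying the crash bound. -/
def ESet (n z : ℕ) : Set (List (Event n)) := { σ | EMem z σ }

/-- `𝓔*_z`: executions satisfying the crash bound in every prefix. -/
def EStarSet (n z : ℕ) : Set (List (Event n)) := { σ | ∀ τ, τ <+: σ → EMem z τ }

/-- `e` is an event by a process in `P`. -/
def eventBy (P : Set (Fin n)) : Event n → Prop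
  | .step i => i ∈ P
  | .crash i => i ∈ P

/-- The set of processes `P` is `v`-univalent in the execution `α` from `C` with respect to
the set of executions `𝒜`. -/
def VUnivalentIn (A : Algorithm n) (input : Fin n → Bool) (C : Config A)
    (𝒜 : Set (List (Event n))) (P : Set (Fin n)) (α : List (Event n)) (v : Bool) : Prop :=
  α ∈ 𝒜 ∧ ∀ β : List (Event n), (∀ e ∈ β, eventBy P e) → (α ++ β) ∈ 𝒜 →
    ∀ (i : Fin n) (w : Bool), HasDecided A input C (α ++ β) i w → w = v

/-- The set of processes `P` is bivalent in the execution `α` from `C` with respect to `𝒜`. -/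
def BivalentIn (A : Algorithm n) (input : Fin n → Bool) (C : Config A)
    (𝒜 : Set (List (Event n))) (P : Set (Fin n)) (α : List (Event n)) : Prop :=
  ∀ v : Bool, ∃ β : List (Event n), (∀ e ∈ β, eventBy P e) ∧ (α ++ β) ∈ 𝒜 ∧
    ∃ i : Fin n, HasDecided A input C (α ++ β) i v

/-- `P` is univalent in `α` with respect to `𝒜`: `v`-univalent for some `v`. -/
def UnivalentIn (A : Algorithm n) (input : Fin n → Bool) (C : Config A)
    (𝒜 : Set (List (Event n))) (P : Set (Fin n)) (α : List (Event n)) : Prop :=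
  ∃ v : Bool, VUnivalentIn A input C 𝒜 P α v

/-- `α ∈ 𝒜` is critical with respect to `𝒜`: `α` is bivalent with respect to `𝒜` and every
nonempty extension of `α` inside `𝒜` is univalent with respect to `𝒜`. -/
def Critical (A : Algorithm n) (input : Fin n → Bool) (C : Config A)
    (𝒜 : Set (List (Event n))) (α : List (Event n)) : Prop :=
  α ∈ 𝒜 ∧ BivalentIn A input C 𝒜 Set.univ α ∧
  ∀ β : List (Event n), β ≠ [] → (α ++ β) ∈ 𝒜 → UnivalentIn A input C 𝒜 Set.univ (α ++ β)

/-- Process `i` is on team `v` in `Cα` (with respect to `𝒜`): `α p_i` is `v`-univalent. -/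
def OnTeam (A : Algorithm n) (input : Fin n → Bool) (C : Config A)
    (𝒜 : Set (List (Event n))) (α : List (Event n)) (i : Fin n) (v : Bool) : Prop :=
  VUnivalentIn A input C 𝒜 Set.univ (α ++ [Event.step i]) v

/-- Process `i` is poised to apply an operation to object `O` in configuration `C`. -/
def PoisedAt (A : Algorithm n) (C : Config A) (i : Fin n) (O : A.ObjIdx) : Prop :=
  ∃ op, A.pending i (C.pstate i) = some ⟨O, op⟩

/-- `σ ∈ 𝒮(P)`: a crash-free schedule in which each process of `P` takes at most one step
and no other process takes a step. -/
def IsSched (P : Set (Fin n)) (σ : List (Event n)) : Prop :=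
  ∃ l : List (Fin n), l.Nodup ∧ (∀ j ∈ l, j ∈ P) ∧ σ = l.map Event.step

/-- The schedule `λ_k = c_k c_{k+1} ⋯ c_{n-1}`. -/
def lambdaSched (n k : ℕ) : List (Event n) :=
  ((List.finRange n).filter fun j => decide (k ≤ j.val)).map Event.crash

/-- `U_v`: the set of values of object `O` reachable from `Dα` by a schedule in `𝒮(𝒫)`
whose first process is on team `v`. -/
def USetCfg (A : Algorithm n) (input : Fin n → Bool) (D : Config A)
    (𝒜 : Set (List (Event n))) (α : List (Event n)) (O : A.ObjIdx) (v : Bool) :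
    Set (A.objType O).Value :=
  { w | ∃ (j : Fin n) (σ : List (Event n)), OnTeam A input D 𝒜 α j v ∧
        IsSched {k : Fin n | k ≠ j} σ ∧
        w = (run A input D (α ++ Event.step j :: σ)).oval O }

/-- The configuration `Dα` is `v`-hiding. -/
def VHiding (A : Algorithm n) (input : Fin n → Bool) (D : Config A)
    (𝒜 : Set (List (Event n))) (α : List (Event n)) (O : A.ObjIdx) (v : Bool) : Prop :=
  USetCfg A input D 𝒜 α O false ∩ USetCfg A input D 𝒜 α O true = ∅ ∧
  (run A input D α).oval O ∈ USetCfg A input D 𝒜 α O v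

/-- The configuration `Dα` is `n`-recording. -/
def NRecordingCfg (A : Algorithm n) (input : Fin n → Bool) (D : Config A)
    (𝒜 : Set (List (Event n))) (α : List (Event n)) (O : A.ObjIdx) : Prop :=
  USetCfg A input D 𝒜 α O false ∩ USetCfg A input D 𝒜 α O true = ∅ ∧
  ∀ v : Bool, (run A input D α).oval O ∈ USetCfg A input D 𝒜 α O v →
    ∃! j : Fin n, OnTeam A input D 𝒜 α j (!v)

/-- Apply the operations `o i` of the processes listed in `σ`, in order, to an object of type
`T`, starting from the value `u`. -/
def applyOps (T : DetType) (o : Fin n → T.Op) : T.Value → List (Fin n) → T.Value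
  | u, [] => u
  | u, i :: σ => applyOps T o (T.δ u (o i)).2 σ

/-- `U_x`: the set of values obtainable by applying the operations of the processes of a
duplicate-free schedule whose first process is on team `x` to an object with initial value
`u`. -/
def UVals (T : DetType) (o : Fin n → T.Op) (u : T.Value) (team : Fin n → Bool) (x : Bool) :
    Set T.Value :=
  { v | ∃ (i : Fin n) (σ : List (Fin n)), team i = x ∧ (i :: σ).Nodup ∧
        v = applyOps T o u (i :: σ) }

/-- A deterministic type `T` is `n`-recording. -/
def NRecording (n : ℕ) (T : DetType) : Prop :=
  ∃ (u : T.Value) (team : Fin n → Bool) (o : Fin n → T.Op),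
    (∀ x : Bool, ∃ i, team i = x) ∧
    (UVals T o u team false ∩ UVals T o u team true = ∅) ∧
    (∀ x : Bool, u ∈ UVals T o u team x → ∃! i, team i = !x)

end RecoverableConsensus

namespace RecoverableConsensus

theorem run_append {n : ℕ} (A : Algorithm n) (input : Fin n → Bool) (C : Config A)
    (σ τ : List (Event n)) :
    run A input C (σ ++ τ) = run A input (run A input C σ) τ := by
  induction σ generalizing C with
  | nil => rfl
  | cons e σ ih => exact ih _

theorem HasDecided.mono {n : ℕ} {A : Algorithm n} {input : Fin n → Bool} {C : Config A}
    {σ τ : List (Event n)} {i : Fin n} {v : Bool} (h : HasDecided A input C σ i v)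
    (hστ : σ <+: τ) : HasDecided A input C τ i v := by
  obtain ⟨ρ, hρ, ho⟩ := h
  exact ⟨ρ, hρ.trans hστ, ho⟩

theorem crashCount_append {n : ℕ} (i : Fin n) (σ τ : List (Event n)) :
    crashCount i (σ ++ τ) = crashCount i σ + crashCount i τ := by
  simp [crashCount]

theorem stepsBelow_append {n : ℕ} (i : Fin n) (σ τ : List (Event n)) :
    stepsBelow i (σ ++ τ) = stepsBelow i σ + stepsBelow i τ := by
  simp [stepsBelow]

theorem crashCount_step {n : ℕ} (i j : Fin n) : crashCount i [Event.step j] = 0 := by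
  simp [crashCount]

theorem EMem.append {n z : ℕ} {σ τ : List (Event n)} (hσ : EMem z σ) (hτ : EMem z τ) :
    EMem z (σ ++ τ) := by
  intro i
  rw [crashCount_append, stepsBelow_append, mul_add]
  exact add_le_add (hσ i) (hτ i)

theorem EMem.append_step {n z : ℕ} {σ : List (Event n)} (hσ : EMem z σ) (j : Fin n) :
    EMem z (σ ++ [Event.step j]) :=
  hσ.append fun i => by rw [crashCount_step]; exact Nat.zero_le _

theorem nil_mem_estar (n z : ℕ) : ([] : List (Event n)) ∈ EStarSet n z := by
  intro τ hτ i
  rw [List.prefix_nil.1 hτ]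
  simp [crashCount]

theorem emem_of_mem_estar {n z : ℕ} {σ : List (Event n)} (h : σ ∈ EStarSet n z) : EMem z σ :=
  h σ List.prefix_rfl

theorem estar_of_prefix {n z : ℕ} {σ τ : List (Event n)} (h : τ ∈ EStarSet n z)
    (hστ : σ <+: τ) : σ ∈ EStarSet n z :=
  fun ρ hρ => h ρ (hρ.trans hστ)

theorem estar_concat {n z : ℕ} {σ : List (Event n)} {e : Event n} (h : σ ∈ EStarSet n z)
    (he : EMem z (σ ++ [e])) : σ ++ [e] ∈ EStarSet n z := by
  intro τ hτ
  rcases List.prefix_concat_iff.1 hτ with rfl | hτ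
  · exact he
  · exact h τ hτ

theorem estar_step {n z : ℕ} {σ : List (Event n)} (h : σ ∈ EStarSet n z) (j : Fin n) :
    σ ++ [Event.step j] ∈ EStarSet n z :=
  estar_concat h ((emem_of_mem_estar h).append_step j)

theorem append_mem_estar {n z : ℕ} {σ τ : List (Event n)} (hσ : σ ∈ EStarSet n z)
    (hτ : τ ∈ EStarSet n z) : σ ++ τ ∈ EStarSet n z := by
  induction τ using List.reverseRecOn with
  | nil => simpa using hσ
  | append_singleton τ e ih =>
    rw [← List.append_assoc]
    refine estar_concat (ih (estar_of_prefix hτ (List.prefix_append _ _))) ?_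
    rw [List.append_assoc]
    exact (emem_of_mem_estar hσ).append (emem_of_mem_estar hτ)

theorem replicate_step_mem_estar {n : ℕ} (z k : ℕ) (j : Fin n) :
    List.replicate k (Event.step j) ∈ EStarSet n z := by
  induction k with
  | zero => exact nil_mem_estar n z
  | succ k ih => rw [List.replicate_succ']; exact estar_step ih j

/-- A process in its initial state decides when it runs alone. -/
theorem solo_decides {n : ℕ} {A : Algorithm n} (hA : RecWaitFree A) (input : Fin n → Bool)
    (D : Config A) (i : Fin n) (hD : D.pstate i = A.init i (input i)) :
    ∃ (k : ℕ) (w : Bool),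
      A.output i ((run A input D (List.replicate k (Event.step i))).pstate i) = some w := by
  obtain ⟨k, w, h⟩ := hA input D (fun _ => Event.step i) i (Or.inl hD)
    (fun m => ⟨m, le_rfl, rfl⟩) ⟨0, fun k _ => by simp⟩
  refine ⟨k, w, ?_⟩
  simpa [initSeg] using h

theorem pstate_crash {n : ℕ} (A : Algorithm n) (input : Fin n → Bool) (C : Config A)
    (i : Fin n) : (applyEvent A input C (Event.crash i)).pstate i = A.init i (input i) := by
  simp [applyEvent]

/-- A step of one process and a crash of another commute. -/
theorem step_crash_comm {n : ℕ} (A : Algorithm n) (input : Fin n → Bool) (C : Config A)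
    {i j : Fin n} (h : j ≠ i) :
    applyEvent A input (applyEvent A input C (Event.crash i)) (Event.step j) =
      applyEvent A input (applyEvent A input C (Event.step j)) (Event.crash i) := by
  simp only [applyEvent, Function.update_of_ne h]
  cases A.pending j (C.pstate j) with
  | none => rfl
  | some p => simp only [Function.update_comm h]

/-- A univalent execution is `v`-univalent if some extension of it decides `v`. -/
theorem vunivalent_of_decided {n : ℕ} {A : Algorithm n} {input : Fin n → Bool} {C : Config A}
    {𝒜 : Set (List (Event n))} {α β : List (Event n)} {i : Fin n} {v : Bool}
    (h : UnivalentIn A input C 𝒜 Set.univ α) (hβ : α ++ β ∈ 𝒜)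
    (hd : HasDecided A input C (α ++ β) i v) : VUnivalentIn A input C 𝒜 Set.univ α v := by
  obtain ⟨w, hw⟩ := h
  have hvw : v = w := hw.2 β (fun e _ => by cases e <;> trivial) hβ i v hd
  exact hvw ▸ hw

/-- Each value is the valency of a one-step extension of a critical execution. -/
theorem exists_onTeam {n : ℕ} (hn : 0 < n) {A : Algorithm n} (hA : RecWaitFree A)
    {input : Fin n → Bool} {C : Config A} {z : ℕ} {α : List (Event n)}
    (hcrit : Critical A input C (EStarSet n z) α) (v : Bool) :
    ∃ j, OnTeam A input C (EStarSet n z) α j v := by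
  obtain ⟨hα, hbiv, huniv⟩ := hcrit
  obtain ⟨β, -, hβ, i, hd⟩ := hbiv v
  have hstep : ∀ j, α ++ [Event.step j] ∈ EStarSet n z := estar_step hα
  have hsu : ∀ j, UnivalentIn A input C (EStarSet n z) Set.univ (α ++ [Event.step j]) :=
    fun j => huniv _ (by simp) (hstep j)
  cases β with
  | nil =>
    refine ⟨⟨0, hn⟩, vunivalent_of_decided (β := []) (hsu _) ?_ (i := i) ?_⟩
    · simpa using hstep _
    · exact hd.mono (by simp)
  | cons e β =>
    cases e with
    | step j =>
      refine ⟨j, vunivalent_of_decided (β := β) (hsu _) ?_ (i := i) ?_⟩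
      · simpa using hβ
      · simpa using hd
    | crash c =>
      have hc : α ++ [Event.crash c] ∈ EStarSet n z := estar_of_prefix hβ (by simp)
      have hcv : VUnivalentIn A input C (EStarSet n z) Set.univ (α ++ [Event.crash c]) v := by
        refine vunivalent_of_decided (β := β) (huniv _ (by simp) hc) ?_ (i := i) ?_
        · simpa using hβ
        · simpa using hd
      have hc0 : (⟨0, hn⟩ : Fin n) ≠ c := by
        rintro rfl
        have h := emem_of_mem_estar hc ⟨0, hn⟩
        -- no process has a smaller index than `p_0`, so its crash budget is zero
        have h0 : ∀ σ : List (Event n), stepsBelow ⟨0, hn⟩ σ = 0 := by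
          intro σ
          simp only [stepsBelow, List.length_eq_zero_iff, List.filter_eq_nil_iff]
          intro e _
          cases e <;> simp [isStepBelow, Fin.lt_def]
        rw [h0, crashCount_append] at h
        simp [crashCount] at h
      have hsc : (α ++ [Event.step ⟨0, hn⟩]) ++ [Event.crash c] ∈ EStarSet n z := by
        refine estar_concat (hstep _) fun l => ?_
        have h := emem_of_mem_estar hc l
        rw [crashCount_append, stepsBelow_append] at h
        rw [crashCount_append, crashCount_append, crashCount_step, stepsBelow_append,
          stepsBelow_append]
        refine h.trans (Nat.mul_le_mul_left _ ?_)
        omega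
      set D := run A input C ((α ++ [Event.step ⟨0, hn⟩]) ++ [Event.crash c]) with hDdef
      have hD : D = run A input C ((α ++ [Event.crash c]) ++ [Event.step ⟨0, hn⟩]) := by
        simp only [hDdef, run_append, run]
        exact (step_crash_comm A input _ hc0).symm
      have hDc : D.pstate c = A.init c (input c) := by
        simp only [hDdef, run_append, run]
        exact pstate_crash _ _ _ _
      obtain ⟨k, w, hw⟩ := solo_decides hA input D c hDc
      have hrep := replicate_step_mem_estar z k c
      have hwv : w = v := by
        refine hcv.2 (Event.step ⟨0, hn⟩ :: List.replicate k (Event.step c))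
          (fun e _ => by cases e <;> trivial) ?_ c w ⟨_, List.prefix_rfl, ?_⟩
        · simpa using append_mem_estar (estar_step hc ⟨0, hn⟩) hrep
        · rw [hD, ← run_append] at hw
          simpa using hw
      subst hwv
      refine ⟨⟨0, hn⟩, vunivalent_of_decided
        (β := Event.crash c :: List.replicate k (Event.step c)) (hsu _) ?_ (i := c)
        ⟨_, List.prefix_rfl, ?_⟩⟩
      · simpa using append_mem_estar hsc hrep
      · rw [hDdef, ← run_append] at hw
        simpa using hw

end RecoverableConsensus

open RecoverableConsensus in
/-- In the critical-execution setting, the configuration `Cα` is bivalent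
with respect to `𝓔*_z(Cα)`. -/
theorem critical_config_bivalent
    (n : ℕ) (hn : 2 ≤ n) (A : Algorithm n) (hA : SolvesRecConsensus A)
    (input : Fin n → Bool) (C : Config A) (z : ℕ) (hz : 1 ≤ z)
    (α : List (Event n)) (hα : α ∈ EStarSet n z)
    (hcrit : Critical A input C (EStarSet n z) α) :
    BivalentIn A input (run A input C α) (EStarSet n z) Set.univ [] := by
  intro v
  obtain ⟨j, hj⟩ := exists_onTeam (by omega) hA.2.2 hcrit v
  let p0 : Fin n := ⟨0, by omega⟩
  let q : Fin n := ⟨n - 1, by omega⟩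
  have hpq : p0 < q := by simp only [p0, q, Fin.lt_def]; omega
  have hmem : ([] ++ [Event.step j] ++ [Event.step p0]) ++ [Event.crash q] ∈ EStarSet n z := by
    refine estar_concat (estar_step (estar_step (nil_mem_estar n z) j) p0) fun l => ?_
    by_cases hl : q = l
    · subst hl
      -- the step of `p_0` allows `z * n ≥ 1` crashes of `p_{n-1}`
      have h1 : 1 ≤ stepsBelow q ([] ++ [Event.step j] ++ [Event.step p0] ++ [Event.crash q]) := by
        rw [stepsBelow_append, stepsBelow_append]
        have : stepsBelow q [Event.step p0] = 1 := by simp [stepsBelow, isStepBelow, hpq]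
        omega
      have h2 : crashCount q ([] ++ [Event.step j] ++ [Event.step p0] ++ [Event.crash q]) = 1 := by
        simp [crashCount]
      rw [h2]
      exact Nat.mul_pos (Nat.mul_pos hz (by omega)) h1
    · simp [crashCount, hl]
  set σ : List (Event n) := ([] ++ [Event.step j] ++ [Event.step p0]) ++ [Event.crash q] with hσ
  have hD : (run A input (run A input C α) σ).pstate q = A.init q (input q) := by
    rw [hσ, run_append]
    exact pstate_crash _ _ _ _
  obtain ⟨k, w, hw⟩ := solo_decides hA.2.2 input _ q hD
  have hmem' := append_mem_estar hmem (replicate_step_mem_estar z k q)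
  rw [← run_append] at hw
  have hwv : w = v := by
    refine hj.2 ([Event.step p0, Event.crash q] ++ List.replicate k (Event.step q))
      (fun e _ => by cases e <;> trivial) ?_ q w ⟨_, List.prefix_rfl, ?_⟩
    · simpa [hσ] using append_mem_estar hα hmem'
    · rw [← run_append] at hw
      simpa [hσ] using hw
  subst hwv
  exact ⟨_, fun e _ => by cases e <;> trivial, hmem', q, _, List.prefix_rfl, hw⟩
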